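/- Let g be a Lie algebra over a field K of characteristic 0 with Lie bracket μ ∈ C^2(g), and let D := [μ, −] be the induced differential D : C^a(g) → C^{a+1}(g). Then D is an odd derivation of the Nijenhuis bracket: for all A ∈ C^a(g) and B ∈ C^b(g), D[A,B] = [D A, B] + (−1)^{a−1} [A, D B]. -/

import Mathlib

/-!
Nijenhuis bracket on alternating multilinear cochains `C^n(V)` of an `R`-module `V`.

We encode an `n`-ary map `(Fin n → V) → V` as a map `(ℕ → V) → V` (depending only on the
first `n` coordinates) via `ext`, so that the insertion product and the Nijenhuis bracket,
whose output arities involve `ℕ`-subtraction, can be stated uniformly.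
-/

/-- Extend an `n`-ary map on `V` to a map on sequences, reading the first `n` coordinates. -/
def ext {V : Type*} {n : ℕ} (f : (Fin n → V) → V) : (ℕ → V) → V :=
  fun x => f fun i => x i

/-- The insertion product `A∘B` of an `a`-ary map `f` and a `b`-ary map `g`
(encoded as maps on sequences):
`(A∘B)(x_1,…,x_{a+b−1}) = Σ_σ sgn(σ) A(B(x_{σ(1)},…,x_{σ(b)}), x_{σ(b+1)},…,x_{σ(a+b−1)})`,
the sum running over all permutations `σ` of `{1,…,a+b−1}` increasing on the first `b` and
on the last `a-1` positions; it is `0` when `a = 0`. -/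
noncomputable def ins {V : Type*} [AddCommGroup V] (a b : ℕ) (f g : (ℕ → V) → V) :
    (ℕ → V) → V := fun x =>
  if hA : a = 0 then 0
  else
    ∑ σ ∈ Finset.univ.filter (fun σ : Equiv.Perm (Fin (a + b - 1)) =>
        (∀ i j : Fin (a + b - 1), i < j → (j : ℕ) < b → σ i < σ j) ∧
        (∀ i j : Fin (a + b - 1), i < j → b ≤ (i : ℕ) → σ i < σ j)),
      (Equiv.Perm.sign σ : ℤ) •
        f (fun i : ℕ =>
          if i = 0 then
            g (fun k : ℕ =>
              if hk : k < b then x ((σ ⟨k, by omega⟩ : Fin (a + b - 1)) : ℕ) else 0)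
          else if hi : b + i - 1 < a + b - 1 then
            x ((σ ⟨b + i - 1, hi⟩ : Fin (a + b - 1)) : ℕ)
          else 0)

/-- The Nijenhuis bracket `[A,B] := A∘B − (−1)^{(a−1)(b−1)} B∘A`. -/
noncomputable def nij {V : Type*} [AddCommGroup V] (a b : ℕ) (f g : (ℕ → V) → V) :
    (ℕ → V) → V := fun x =>
  ins a b f g x - (Int.negOnePow (((a : ℤ) - 1) * ((b : ℤ) - 1)) : ℤ) • ins b a g f x


namespace NijAux

variable {V : Type*} [AddCommGroup V]

/-- Contraction. -/
def ctr (x : V) (f : List V → V) : List V → V := fun l => f (x :: l)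

/-- Parity involution. -/
def eps (f : List V → V) : List V → V := fun l => (-1 : ℤ) ^ l.length • f l

/-- Insertion product, recursively. -/
def P : List V → (List V → V) → (List V → V) → V
  | [], f, g => f [g []]
  | x :: l, f, g => P l f (ctr x g) - P l (ctr x f) (eps g)

/-- Insertion product as a cochain. -/
def PP (f g : List V → V) : List V → V := fun l => P l f g

/-- Sign. -/
def sg (n : ℤ) : ℤ := (Int.negOnePow n : ℤ)

structure Good (f : List V → V) : Prop where
  add : ∀ l₁ x y l₂, f (l₁ ++ (x + y) :: l₂) = f (l₁ ++ x :: l₂) + f (l₁ ++ y :: l₂)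
  skew : ∀ l₁ x y l₂, f (l₁ ++ x :: y :: l₂) = - f (l₁ ++ y :: x :: l₂)

def Hom (n : ℤ) (f : List V → V) : Prop := ∀ l : List V, (l.length : ℤ) ≠ n → f l = 0

theorem sg_add (m n : ℤ) : sg (m + n) = sg m * sg n := by
  simp [sg, Int.negOnePow_add]

theorem sg_cases (n : ℤ) : sg n = 1 ∨ sg n = -1 := by
  rcases Int.even_or_odd n with h | h
  · left; simp [sg, Int.negOnePow_even n h]
  · right; simp [sg, Int.negOnePow_odd n h]

theorem sg_one : sg 1 = -1 := by simp [sg]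

theorem sg_neg (m : ℤ) : sg (-m) = sg m := by simp [sg]

theorem sg_sub (m n : ℤ) : sg (m - n) = sg m * sg n := by
  rw [sub_eq_add_neg, sg_add, sg_neg]

theorem sg_nat (n : ℕ) : sg n = (-1) ^ n := by
  induction n with
  | zero => simp [sg]
  | succ n ih => rw [Nat.cast_succ, sg_add, ih, sg_one, pow_succ]

theorem Good.ctr {f : List V → V} (h : Good f) (x : V) : Good (ctr x f) :=
  ⟨fun l₁ y z l₂ => h.add (x :: l₁) y z l₂, fun l₁ y z l₂ => h.skew (x :: l₁) y z l₂⟩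

theorem Good.sub {f g : List V → V} (h : Good f) (h' : Good g) : Good (f - g) :=
  ⟨fun l₁ y z l₂ => by simp only [Pi.sub_apply, h.add, h'.add]; abel,
   fun l₁ y z l₂ => by simp only [Pi.sub_apply]; rw [h.skew, h'.skew]; abel⟩

theorem Good.smul {f : List V → V} (h : Good f) (c : ℤ) : Good (c • f) :=
  ⟨fun l₁ y z l₂ => by simp only [Pi.smul_apply, h.add, smul_add],
   fun l₁ y z l₂ => by simp only [Pi.smul_apply]; rw [h.skew, smul_neg]⟩

theorem Good.eps {f : List V → V} (h : Good f) : Good (eps f) :=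
  ⟨fun l₁ y z l₂ => by simp [NijAux.eps, h.add],
   fun l₁ y z l₂ => by simp only [NijAux.eps]; rw [h.skew]; simp⟩

theorem Good.zero {f : List V → V} (h : Good f) (l₁ l₂ : List V) : f (l₁ ++ 0 :: l₂) = 0 := by
  have := h.add l₁ 0 0 l₂
  simpa using this

theorem Hom.ctr {n : ℤ} {f : List V → V} (h : Hom n f) (x : V) : Hom (n - 1) (ctr x f) := by
  intro l hl
  apply h
  simp only [List.length_cons]; push_cast; omega

theorem Hom.eps {n : ℤ} {f : List V → V} (h : Hom n f) : eps f = sg n • f := by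
  funext l
  by_cases hl : (l.length : ℤ) = n
  · simp [NijAux.eps, ← hl, sg_nat]
  · simp [NijAux.eps, h l hl]

theorem Hom.sub {n : ℤ} {f g : List V → V} (h : Hom n f) (h' : Hom n g) : Hom n (f - g) := by
  intro l hl
  simp [h l hl, h' l hl]

theorem Hom.smul {n : ℤ} {f : List V → V} (h : Hom n f) (c : ℤ) : Hom n (c • f) := by
  intro l hl
  simp [h l hl]

theorem P_add_left (l : List V) : ∀ f f' g : List V → V, P l (f + f') g = P l f g + P l f' g := by
  induction l with
  | nil => intros; rfl
  | cons x l ih =>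
    intro f f' g
    have : ctr x (f + f') = ctr x f + ctr x f' := rfl
    simp only [P, this, ih]; abel

theorem eps_add (f g : List V → V) : eps (f + g) = eps f + eps g := by
  funext l; simp [eps]

theorem P_add_right (l : List V) : ∀ f g g' : List V → V, Good f →
    P l f (g + g') = P l f g + P l f g' := by
  induction l with
  | nil => intro f g g' hf; exact hf.add [] _ _ []
  | cons x l ih =>
    intro f g g' hf
    have : ctr x (g + g') = ctr x g + ctr x g' := rfl
    simp only [P, this, eps_add, ih _ _ _ hf, ih _ _ _ (hf.ctr x)]; abel

def PL (l : List V) (g : List V → V) : (List V → V) →+ V :=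
  AddMonoidHom.mk' (fun f => P l f g) (fun f f' => P_add_left l f f' g)

def PR (l : List V) (f : List V → V) (hf : Good f) : (List V → V) →+ V :=
  AddMonoidHom.mk' (fun g => P l f g) (fun g g' => P_add_right l f g g' hf)

theorem P_sub_left (l : List V) (f f' g : List V → V) :
    P l (f - f') g = P l f g - P l f' g := map_sub (PL l g) f f'

theorem P_smul_left (l : List V) (c : ℤ) (f g : List V → V) :
    P l (c • f) g = c • P l f g := map_zsmul (PL l g) c f

theorem P_zero_left (l : List V) (g : List V → V) : P l 0 g = 0 := map_zero (PL l g)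

theorem P_sub_right (l : List V) (f g g' : List V → V) (hf : Good f) :
    P l f (g - g') = P l f g - P l f g' := map_sub (PR l f hf) g g'

theorem P_smul_right (l : List V) (c : ℤ) (f g : List V → V) (hf : Good f) :
    P l f (c • g) = c • P l f g := map_zsmul (PR l f hf) c g

theorem P_zero_right (l : List V) (f : List V → V) (hf : Good f) : P l f 0 = 0 :=
  map_zero (PR l f hf)

theorem ctr_PP (x : V) (f g : List V → V) :
    ctr x (PP f g) = PP f (ctr x g) - PP (ctr x f) (eps g) := rfl

theorem Hom.PP {a b : ℤ} {f g : List V → V} (hf : Hom a f) (hg : Hom b g) (Gf : Good f) :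
    Hom (a + b - 1) (PP f g) := by
  intro l
  induction l generalizing a b f g with
  | nil =>
    intro hl
    by_cases ha : a = 1
    · have : g [] = 0 := hg [] (by simp at hl ⊢; omega)
      simp only [NijAux.PP, P, this]
      exact Gf.zero [] []
    · exact hf _ (by simp; omega)
  | cons x l ih =>
    intro hl
    simp only [List.length_cons] at hl
    push_cast at hl
    have h1 := ih hf (hg.ctr x) Gf (by omega)
    have h2 := ih (hf.ctr x) hg (Gf.ctr x) (by omega)
    simp only [NijAux.PP] at h1 h2
    simp only [NijAux.PP, P, h1, hg.eps, P_smul_right _ _ _ _ (Gf.ctr x), h2]; simp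

theorem Good.PP {f g : List V → V} (hf : Good f) (hg : Good g) : Good (PP f g) := by
  constructor
  · intro l₁
    induction l₁ generalizing f g with
    | nil =>
      intro x y l
      have h1 : NijAux.ctr (x + y) f = NijAux.ctr x f + NijAux.ctr y f := by
        funext l; exact hf.add [] x y l
      have h2 : NijAux.ctr (x + y) g = NijAux.ctr x g + NijAux.ctr y g := by
        funext l; exact hg.add [] x y l
      simp only [NijAux.PP, P, List.nil_append, h1, h2, P_add_left, P_add_right _ _ _ _ hf]
      abel
    | cons z l₁ ih =>
      intro x y l
      have h1 := ih hf (hg.ctr z) x y l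
      have h2 := ih (hf.ctr z) hg.eps x y l
      simp only [NijAux.PP] at h1 h2
      simp only [NijAux.PP, P, List.cons_append, h1, h2]
      abel
  · intro l₁
    induction l₁ generalizing f g with
    | nil =>
      intro x y l
      have h1 : NijAux.ctr x (NijAux.ctr y f) = - NijAux.ctr y (NijAux.ctr x f) := by
        funext l; exact hf.skew [] y x l
      have h2 : NijAux.ctr x (NijAux.ctr y g) = - NijAux.ctr y (NijAux.ctr x g) := by
        funext l; exact hg.skew [] y x l
      have h3 : ∀ z, NijAux.ctr z (NijAux.eps g) = (-1 : ℤ) • NijAux.eps (NijAux.ctr z g) := by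
        intro z; funext l; simp [NijAux.ctr, NijAux.eps, pow_succ]
      have h4 : NijAux.eps (NijAux.eps g) = g := by
        funext l; simp [NijAux.eps, smul_smul, ← mul_pow]
      have h5 : - NijAux.ctr y (NijAux.ctr x f) = (-1 : ℤ) • NijAux.ctr y (NijAux.ctr x f) := by simp
      have h6 : - NijAux.ctr y (NijAux.ctr x g) = (-1 : ℤ) • NijAux.ctr y (NijAux.ctr x g) := by simp
      simp only [NijAux.PP, P, List.nil_append, h1, h2, h3, h4, h5, h6, P_smul_left,
        P_smul_right _ _ _ _ hf, P_smul_right _ _ _ _ (hf.ctr _)]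
      module
    | cons z l₁ ih =>
      intro x y l
      have h1 := ih hf (hg.ctr z) x y l
      have h2 := ih (hf.ctr z) hg.eps x y l
      simp only [NijAux.PP] at h1 h2
      simp only [NijAux.PP, P, List.cons_append]
      rw [h1, h2]
      abel

theorem preLie (l : List V) : ∀ (b c : ℤ) (f g h : List V → V), Good f → Good g → Good h →
    Hom b g → Hom c h →
    P l (PP f g) h - P l f (PP g h) =
      sg ((b - 1) * (c - 1)) • (P l (PP f h) g - P l f (PP h g)) := by
  induction l with
  | nil =>
    intro b c f g h hf hg hh Hg Hh
    have key : ∀ g h : List V → V,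
        P [] (PP f g) h - P [] f (PP g h) = - f [h [], g []] := by
      intro g h
      simp [P, PP, ctr, eps]
    rw [key, key]
    by_cases hb : b = 0
    · by_cases hc : c = 0
      · subst hb hc
        have := hf.skew [] (h []) (g []) []
        simp only [List.nil_append] at this
        rw [this]
        simp [sg]
      · have : h [] = 0 := Hh [] (by simpa using Ne.symm hc)
        rw [this]
        have h1 := hf.zero [] [g []]
        have h2 := hf.zero [g []] []
        simp only [List.nil_append, List.cons_append] at h1 h2
        simp [h1, h2]
    · have : g [] = 0 := Hg [] (by simpa using Ne.symm hb)
      rw [this]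
      have h1 := hf.zero [] [h []]
      have h2 := hf.zero [h []] []
      simp only [List.nil_append, List.cons_append] at h1 h2
      simp [h1, h2]
  | cons x l ih =>
    intro b c f g h hf hg hh Hg Hh
    have e1 := ih b (c - 1) f g (ctr x h) hf hg (hh.ctr x) Hg (Hh.ctr x)
    have e2 := ih (b - 1) c f (ctr x g) h hf (hg.ctr x) hh (Hg.ctr x) Hh
    have e3 := ih b c (ctr x f) g h (hf.ctr x) hg hh Hg Hh
    have s1 : sg ((b - 1) * (c - 1 - 1)) = - (sg ((b - 1) * (c - 1)) * sg b) := by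
      rw [show (b - 1) * (c - 1 - 1) = (b - 1) * (c - 1) - (b - 1) by ring, sg_sub _ (b - 1),
        sg_sub b, sg_one]; ring
    have s2 : sg ((b - 1 - 1) * (c - 1)) = - (sg ((b - 1) * (c - 1)) * sg c) := by
      rw [show (b - 1 - 1) * (c - 1) = (b - 1) * (c - 1) - (c - 1) by ring, sg_sub _ (c - 1),
        sg_sub c, sg_one]; ring
    have s3 : sg (b + c - 1) = - (sg b * sg c) := by
      rw [sg_sub, sg_add, sg_one]; ring
    have s4 : sg (c + b - 1) = - (sg b * sg c) := by
      rw [sg_sub, sg_add, sg_one]; ring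
    rw [s1] at e1
    rw [s2] at e2
    have Gfg := hf.PP hg
    have PPs : ∀ (c : ℤ) (u v : List V → V), Good u → PP u (c • v) = c • PP u v := by
      intro c u v hu; funext l; exact P_smul_right l c u v hu
    simp only [P, ctr_PP, (Hg.PP Hh hg).eps, (Hh.PP Hg hh).eps, Hg.eps, Hh.eps, s3, s4,
      P_sub_left, P_smul_left, P_sub_right _ _ _ _ hf,
      PPs _ _ _ (hf.ctr x), PPs _ _ _ (hg.ctr x),
      PPs _ _ _ (hh.ctr x), P_smul_right _ _ _ _ hf,
      P_smul_right _ _ _ _ (hf.ctr x),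
      P_smul_right _ _ _ _ (hf.PP (hg.ctr x)), P_smul_right _ _ _ _ ((hf.ctr x).PP hg),
      P_smul_right _ _ _ _ (hf.PP (hh.ctr x)), P_smul_right _ _ _ _ ((hf.ctr x).PP hh)]
    rcases sg_cases b with hb | hb <;> rcases sg_cases c with hc | hc <;>
      rcases sg_cases ((b - 1) * (c - 1)) with hs | hs <;>
      rw [hb, hs] at e1 <;> rw [hc, hs] at e2 <;> rw [hs] at e3 <;> rw [hb, hc, hs]
    · linear_combination (norm := module) e1 - e2 + e3
    · linear_combination (norm := module) e1 - e2 + e3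
    · linear_combination (norm := module) e1 + e2 - e3
    · linear_combination (norm := module) e1 + e2 - e3
    · linear_combination (norm := module) e1 - e2 - e3
    · linear_combination (norm := module) e1 - e2 - e3
    · linear_combination (norm := module) e1 + e2 + e3
    · linear_combination (norm := module) e1 + e2 + e3

/-- Bracket. -/
def N (a b : ℤ) (f g : List V → V) : List V → V :=
  PP f g - sg ((a - 1) * (b - 1)) • PP g f

theorem Good.N {f g : List V → V} (a b : ℤ) (hf : Good f) (hg : Good g) : Good (N a b f g) :=
  (hf.PP hg).sub ((hg.PP hf).smul _)

theorem jacobi (a b : ℤ) (m f g : List V → V) (hm : Good m) (hf : Good f) (hg : Good g)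
    (Hm : Hom 2 m) (Hf : Hom a f) (Hg : Hom b g) :
    N 2 (a + b - 1) m (N a b f g) =
      N (a + 1) b (N 2 a m f) g + sg (a - 1) • N a (b + 1) f (N 2 b m g) := by
  funext l
  have e1 := preLie l a b m f g hm hf hg Hf Hg
  have e2 := preLie l 2 b f m g hf hm hg Hm Hg
  have e3 := preLie l 2 a g m f hg hm hf Hm Hf
  have s0 : sg ((2 - 1) * (a + b - 1 - 1)) = sg (a - 1) * sg (b - 1) := by
    rw [← sg_add]; congr 1; ring
  have s1 : sg ((a + 1 - 1) * (b - 1)) = sg ((a - 1) * (b - 1)) * sg (b - 1) := by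
    rw [← sg_add]; congr 1; ring
  have s2 : sg ((a - 1) * (b + 1 - 1)) = sg ((a - 1) * (b - 1)) * sg (a - 1) := by
    rw [← sg_add]; congr 1; ring
  have s3 : sg ((2 - 1) * (b - 1)) = sg (b - 1) := by congr 1; ring
  have s4 : sg ((2 - 1) * (a - 1)) = sg (a - 1) := by congr 1; ring
  rw [s3] at e2
  rw [s4] at e3
  have PPd : ∀ (u v : List V → V), PP u v l = P l u v := fun _ _ => rfl
  simp only [N, Pi.add_apply, Pi.sub_apply, Pi.smul_apply, PPd, s0, s1, s2, s3, s4,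
    P_sub_left, P_smul_left, P_sub_right _ _ _ _ hm, P_sub_right _ _ _ _ hf,
    P_sub_right _ _ _ _ hg, P_smul_right _ _ _ _ hm, P_smul_right _ _ _ _ hf,
    P_smul_right _ _ _ _ hg]
  rcases sg_cases (a - 1) with hb | hb <;> rcases sg_cases (b - 1) with hc | hc <;>
      rcases sg_cases ((a - 1) * (b - 1)) with hs | hs <;>
      rw [hb] at e3 <;> rw [hc] at e2 <;> rw [hs] at e1 <;> rw [hb, hc, hs]
  · linear_combination (norm := module) -e1 + e2 - e3
  · linear_combination (norm := module) -e1 + e2 + e3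
  · linear_combination (norm := module) -e1 + e2 + e3
  · linear_combination (norm := module) -e1 + e2 - e3
  · linear_combination (norm := module) -e1 - e2 - e3
  · linear_combination (norm := module) -e1 - e2 + e3
  · linear_combination (norm := module) -e1 - e2 + e3
  · linear_combination (norm := module) -e1 - e2 - e3

end NijAux

namespace NijAux

variable {V : Type*} [AddCommGroup V]

def isSh (n b : ℕ) (σ : Equiv.Perm (Fin n)) : Prop :=
  (∀ i j : Fin n, i < j → (j : ℕ) < b → σ i < σ j) ∧
  (∀ i j : Fin n, i < j → b ≤ (i : ℕ) → σ i < σ j)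

instance (n b : ℕ) : DecidablePred (isSh n b) := fun σ => by unfold isSh; infer_instance

/-- The permutation sending `p` to `0` and otherwise given by `τ`. -/
def cp {n : ℕ} (p : Fin (n + 1)) (τ : Equiv.Perm (Fin n)) : Equiv.Perm (Fin (n + 1)) :=
  p.cycleRange.trans (Equiv.Perm.decomposeFin.symm (0, τ))

theorem cp_self {n : ℕ} (p : Fin (n + 1)) (τ : Equiv.Perm (Fin n)) : cp p τ p = 0 := by
  simp [cp]

theorem cp_succAbove {n : ℕ} (p : Fin (n + 1)) (τ : Equiv.Perm (Fin n)) (i : Fin n) :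
    cp p τ (p.succAbove i) = (τ i).succ := by
  simp [cp]

theorem sign_cp {n : ℕ} (p : Fin (n + 1)) (τ : Equiv.Perm (Fin n)) :
    (Equiv.Perm.sign (cp p τ) : ℤ) = (-1) ^ (p : ℕ) * (Equiv.Perm.sign τ : ℤ) := by
  have : cp p τ = Equiv.Perm.decomposeFin.symm (0, τ) * p.cycleRange := rfl
  rw [this, Equiv.Perm.sign_mul, Equiv.Perm.decomposeFin.symm_sign, Fin.sign_cycleRange]
  simp [mul_comm]

theorem cp_bij (n : ℕ) :
    Function.Bijective (fun q : Fin (n + 1) × Equiv.Perm (Fin n) => cp q.1 q.2) := by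
  rw [Fintype.bijective_iff_injective_and_card]
  constructor
  · rintro ⟨p, τ⟩ ⟨p', τ'⟩ h
    simp only at h
    have hp : p = p' := by
      apply (cp p τ).injective
      rw [cp_self, h, cp_self]
    subst hp
    congr 1
    ext i : 1
    have := congrArg (fun σ => σ (p.succAbove i)) h
    simpa [cp_succAbove] using this
  · simp [Fintype.card_perm, Nat.factorial_succ]

theorem val_succAbove' {n : ℕ} (p : Fin (n + 1)) (i : Fin n) :
    (p.succAbove i : ℕ) = if (i : ℕ) < p then (i : ℕ) else i + 1 := by
  unfold Fin.succAbove
  simp only [Fin.lt_def, Fin.val_castSucc]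
  split <;> simp

theorem isSh_cp {n : ℕ} (b : ℕ) (p : Fin (n + 1)) (τ : Equiv.Perm (Fin n)) :
    isSh (n + 1) b (cp p τ) ↔
      ((p : ℕ) = 0 ∧ 1 ≤ b ∧ isSh n (b - 1) τ) ∨ ((p : ℕ) = b ∧ isSh n b τ) := by
  constructor
  · rintro ⟨h1, h2⟩
    have key : ∀ i j : Fin n, cp p τ (p.succAbove i) < cp p τ (p.succAbove j) → τ i < τ j := by
      intro i j h
      simpa [cp_succAbove] using h
    by_cases hp : (p : ℕ) < b
    · left
      have hp0 : (p : ℕ) = 0 := by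
        by_contra h0
        have := h1 0 p (by rw [Fin.lt_def]; have : ((0 : Fin (n + 1)) : ℕ) = 0 := rfl; omega) hp
        rw [cp_self] at this
        exact absurd this (Fin.not_lt_zero _)
      refine ⟨hp0, by omega, ?_, ?_⟩
      · intro i j hij hj
        apply key
        apply h1
        · exact (Fin.succAbove_lt_succAbove_iff).2 hij
        · rw [val_succAbove']; split <;> omega
      · intro i j hij hj
        apply key
        apply h2
        · exact (Fin.succAbove_lt_succAbove_iff).2 hij
        · rw [val_succAbove']; split <;> omega
    · right
      have hp0 : (p : ℕ) = b := by
        by_contra h0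
        have := h2 ⟨b, by omega⟩ p (by rw [Fin.lt_def]; simp; omega) (by simp)
        rw [cp_self] at this
        exact absurd this (Fin.not_lt_zero _)
      refine ⟨hp0, ?_, ?_⟩
      · intro i j hij hj
        apply key
        apply h1
        · exact (Fin.succAbove_lt_succAbove_iff).2 hij
        · rw [val_succAbove']; split <;> omega
      · intro i j hij hj
        apply key
        apply h2
        · exact (Fin.succAbove_lt_succAbove_iff).2 hij
        · rw [val_succAbove']; split <;> omega
  · intro h
    constructor
    · intro i j hij hj
      rcases Fin.eq_self_or_eq_succAbove p i with hi | ⟨i, rfl⟩ <;>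
      rcases Fin.eq_self_or_eq_succAbove p j with hj' | ⟨j, rfl⟩
      · rw [hi, hj'] at hij
        exact absurd hij (lt_irrefl _)
      · rw [hi, cp_self, cp_succAbove]; exact Fin.succ_pos _
      · exfalso
        rw [hj', Fin.lt_def] at hij
        have hjj := congrArg Fin.val hj'
        rw [val_succAbove'] at hij
        try rw [val_succAbove'] at hj
        split_ifs at hij hj <;> omega
      · rw [cp_succAbove, cp_succAbove, Fin.succ_lt_succ_iff]
        have hij' := (Fin.succAbove_lt_succAbove_iff).1 hij
        rw [val_succAbove'] at hj
        rcases h with ⟨hp, hb, h1, h2⟩ | ⟨hp, h1, h2⟩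
        · apply h1 _ _ hij'; split at hj <;> omega
        · apply h1 _ _ hij'; split at hj <;> omega
    · intro i j hij hj
      rcases Fin.eq_self_or_eq_succAbove p i with hi | ⟨i, rfl⟩ <;>
      rcases Fin.eq_self_or_eq_succAbove p j with hj' | ⟨j, rfl⟩
      · rw [hi, hj'] at hij
        exact absurd hij (lt_irrefl _)
      · rw [hi, cp_self, cp_succAbove]; exact Fin.succ_pos _
      · exfalso
        rw [hj', Fin.lt_def] at hij
        have hjj := congrArg Fin.val hj'
        rw [val_succAbove'] at hij
        try rw [val_succAbove'] at hj
        split_ifs at hij hj <;> omega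
      · rw [cp_succAbove, cp_succAbove, Fin.succ_lt_succ_iff]
        have hij' := (Fin.succAbove_lt_succAbove_iff).1 hij
        rw [val_succAbove'] at hj
        rcases h with ⟨hp, hb, h1, h2⟩ | ⟨hp, h1, h2⟩
        · apply h2 _ _ hij'; split at hj <;> omega
        · apply h2 _ _ hij'; split at hj <;> omega

/-- Signed shuffle sum. -/
noncomputable def W (n b : ℕ) (Φ : List V → V) (y : Fin n → V) : V :=
  ∑ σ ∈ Finset.univ.filter (isSh n b), (Equiv.Perm.sign σ : ℤ) • Φ (List.ofFn (fun i => y (σ i)))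

theorem ofFn_cp {V : Type*} {n : ℕ} (x : V) (y : Fin n → V) (p : Fin (n + 1)) (τ : Equiv.Perm (Fin n)) :
    List.ofFn (fun i => (Fin.cons x y : Fin (n + 1) → V) (cp p τ i)) =
      (List.ofFn (fun i => y (τ i))).insertIdx p x := by
  have hp := p.2
  apply List.ext_getElem
  · rw [List.length_insertIdx_of_le_length (by simp; omega)]; simp
  · intro k h1 h2
    have hk : k < n + 1 := by simpa using h1
    rw [List.getElem_insertIdx]
    simp only [List.getElem_ofFn]
    rcases Fin.eq_self_or_eq_succAbove p ⟨k, hk⟩ with h | ⟨i, h⟩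
    · rw [h, cp_self]
      have : k = p := congrArg Fin.val h
      simp [this]
    · rw [h, cp_succAbove]
      have := congrArg Fin.val h
      rw [val_succAbove'] at this
      simp only at this
      rw [Fin.cons_succ]
      split at this
      · have : k < p := by omega
        simp only [this, dite_true]
        congr 2
        ext; simp; omega
      · have h3 : ¬ k < p := by omega
        have h4 : ¬ k = p := by omega
        simp only [h3, h4, dite_false]
        congr 2
        ext; simp; omega

theorem W_succ (n b : ℕ) (Φ : List V → V) (x : V) (y : Fin n → V) :
    W (n + 1) b Φ (Fin.cons x y) =
      (if 1 ≤ b then W n (b - 1) (fun l => Φ (x :: l)) y else 0) +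
      (if b ≤ n then (-1 : ℤ) ^ b • W n b (fun l => Φ (l.insertIdx b x)) y else 0) := by
  have e : W (n + 1) b Φ (Fin.cons x y) =
      ∑ p : Fin (n + 1), ∑ τ : Equiv.Perm (Fin n),
        if isSh (n + 1) b (cp p τ) then ((-1) ^ (p : ℕ) * (Equiv.Perm.sign τ : ℤ)) •
          Φ ((List.ofFn (fun i => y (τ i))).insertIdx p x) else 0 := by
    rw [W, Finset.sum_filter, ← Fintype.sum_prod_type',
      ← (Equiv.ofBijective _ (cp_bij n)).sum_comp]
    apply Finset.sum_congr rfl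
    rintro ⟨p, τ⟩ -
    simp only [Equiv.ofBijective_apply, sign_cp, ofFn_cp]
  have e2 : ∀ (p : Fin (n + 1)) (τ : Equiv.Perm (Fin n)),
      (if isSh (n + 1) b (cp p τ) then ((-1) ^ (p : ℕ) * (Equiv.Perm.sign τ : ℤ)) •
          Φ ((List.ofFn (fun i => y (τ i))).insertIdx p x) else 0) =
      (if p = 0 then (if 1 ≤ b then (if isSh n (b - 1) τ then (Equiv.Perm.sign τ : ℤ) •
          Φ (x :: (List.ofFn (fun i => y (τ i)))) else 0) else 0) else 0) +
      (if (p : ℕ) = b then (if isSh n b τ then (-1 : ℤ) ^ b • (Equiv.Perm.sign τ : ℤ) •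
          Φ ((List.ofFn (fun i => y (τ i))).insertIdx b x) else 0) else 0) := by
    intro p τ
    have hp0 : p = 0 ↔ (p : ℕ) = 0 := by rw [Fin.ext_iff]; rfl
    by_cases h0 : (p : ℕ) = 0
    · by_cases hb : b = 0
      · subst hb
        simp [isSh_cp, hp0, h0]
      · have : ¬ 0 = b := Ne.symm hb
        have : 1 ≤ b := by omega
        simp [isSh_cp, hp0, h0, *]
    · by_cases hb : (p : ℕ) = b
      · subst hb
        simp [isSh_cp, hp0, h0, mul_smul]
      · simp [isSh_cp, hp0, h0, hb]
  rw [e]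
  simp only [e2, Finset.sum_add_distrib]
  congr 1
  · simp only [W, Finset.sum_filter]
    rw [Finset.sum_eq_single 0]
    · simp
    · intro p _ hp; simp [hp]
    · simp
  · by_cases hb : b ≤ n
    · rw [Finset.sum_eq_single ⟨b, by omega⟩]
      · simp only [W, Finset.sum_filter, hb, if_true, Finset.smul_sum, smul_ite, smul_zero]
      · intro p _ hp
        have : ¬ (p : ℕ) = b := fun h => hp (Fin.ext h)
        simp [this]
      · simp
    · rw [if_neg hb]
      apply Finset.sum_eq_zero
      intro p _
      have : ¬ (p : ℕ) = b := by have := p.2; omega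
      simp [this]

end NijAux

namespace NijAux

variable {V : Type*} [AddCommGroup V]

/-- Cochain body. -/
def body (b : ℕ) (f g : List V → V) : List V → V := fun l => f (g (l.take b) :: l.drop b)

theorem P_short (l : List V) : ∀ (f g : List V → V) (b : ℤ), Good f → Hom b g →
    (l.length : ℤ) < b → P l f g = 0 := by
  induction l with
  | nil =>
    intro f g b hf hg hb
    have : g [] = 0 := hg [] (by simp at hb ⊢; omega)
    simp only [P, this]
    exact hf.zero [] []
  | cons x l ih =>
    intro f g b hf hg hb
    simp only [List.length_cons] at hb
    push_cast at hb
    rw [P, hg.eps, P_smul_right _ _ _ _ (hf.ctr x), ih f _ _ hf (hg.ctr x) (by omega),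
      ih _ g _ (hf.ctr x) hg (by omega)]
    simp

theorem P_hom_zero (l : List V) : ∀ (f g : List V → V) (a : ℤ), a ≤ 0 → Hom a f →
    P l f g = 0 := by
  induction l with
  | nil =>
    intro f g a ha hf
    exact hf _ (by simp; omega)
  | cons x l ih =>
    intro f g a ha hf
    rw [P, ih f _ a ha hf, ih _ _ (a - 1) (by omega) (hf.ctr x)]
    simp

theorem Hom.neg {a : ℤ} {f : List V → V} (hf : Hom a f) (ha : a < 0) : f = 0 := by
  funext l
  exact hf l (by omega)

theorem W_congr {n b : ℕ} {Φ Ψ : List V → V} (h : ∀ l : List V, l.length = n → Φ l = Ψ l)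
    (y : Fin n → V) : W n b Φ y = W n b Ψ y := by
  unfold W
  apply Finset.sum_congr rfl
  intro σ _
  rw [h _ (by simp)]

theorem W_neg {n b : ℕ} {Φ : List V → V} (y : Fin n → V) :
    W n b (fun l => - Φ l) y = - W n b Φ y := by
  unfold W
  simp

theorem insertIdx_eq {V : Type*} (x : V) : ∀ (b : ℕ) (l : List V), b ≤ l.length →
    l.insertIdx b x = l.take b ++ x :: l.drop b
  | 0, l, _ => by simp
  | b + 1, [], h => by simp at h
  | b + 1, y :: l, h => by
    simp only [List.length_cons] at h
    simp [insertIdx_eq x b l (by omega)]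

theorem W_eq_P (n : ℕ) : ∀ (b : ℕ) (f g : List V → V) (y : Fin n → V), b ≤ n → Good f →
    Hom b g → W n b (body b f g) y = P (List.ofFn y) f g := by
  induction n with
  | zero =>
    intro b f g y hb hf hg
    have hb : b = 0 := by omega
    subst hb
    have : Finset.univ.filter (isSh 0 0) = {1} := by
      ext σ
      simp only [Finset.mem_filter, Finset.mem_univ, true_and, Finset.mem_singleton]
      exact ⟨fun _ => Subsingleton.elim _ _, fun _ => ⟨fun i => i.elim0, fun i => i.elim0⟩⟩
    rw [W, this]
    simp [body, P]
  | succ n ih =>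
    intro b f g y hb hf hg
    obtain ⟨x, y, rfl⟩ : ∃ x, ∃ z : Fin n → V, y = Fin.cons x z :=
      ⟨y 0, Fin.tail y, (Fin.cons_self_tail y).symm⟩
    rw [W_succ, List.ofFn_cons, P, sub_eq_add_neg]
    congr 1
    · split_ifs with h
      · obtain ⟨b, rfl⟩ : ∃ c, b = c + 1 := ⟨b - 1, by omega⟩
        have := ih b f (ctr x g) y (by omega) hf (by simpa using hg.ctr x)
        rw [← this]
        rfl
      · have hb0 : b = 0 := by omega
        subst hb0
        rw [(hg.ctr x).neg (by simp), P_zero_right _ _ hf]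
    · rw [hg.eps, P_smul_right _ _ _ _ (hf.ctr x), sg_nat]
      split_ifs with h
      · rw [← ih b (ctr x f) g y h (hf.ctr x) hg, ← smul_neg, ← W_neg]
        congr 1
        apply W_congr
        intro l hl
        have h1 : (l.insertIdx b x).take b = l.take b := by
          rw [insertIdx_eq _ _ _ (by omega), List.take_left' (by simp; omega)]
        have h2 : (l.insertIdx b x).drop b = x :: l.drop b := by
          rw [insertIdx_eq _ _ _ (by omega), List.drop_left' (by simp; omega)]
        simp only [body, h1, h2]
        exact hf.skew [] _ _ _
      · rw [P_short _ _ g b (hf.ctr x) hg (by simp; omega)]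
        simp

/-- Cochains on sequences to cochains on lists. -/
def T (n : ℕ) (F : (ℕ → V) → V) : List V → V := fun l =>
  if l.length = n then F (fun i => l.getD i 0) else 0

theorem T_hom (n : ℕ) (F : (ℕ → V) → V) : Hom n (T n F) := by
  intro l hl
  unfold T
  rw [if_neg (by exact_mod_cast hl)]

theorem ins_eq (a b : ℕ) (F G : (ℕ → V) → V) (hF : Good (T a F)) (x : ℕ → V) :
    ins a b F G x = P (List.ofFn (fun i : Fin (a + b - 1) => x i)) (T a F) (T b G) := by
  by_cases ha : a = 0
  · rw [P_hom_zero _ _ _ a (by omega) (T_hom a F)]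
    simp [ins, ha]
  · rw [← W_eq_P _ b _ _ _ (by omega) hF (T_hom b G)]
    unfold ins W
    rw [dif_neg ha]
    apply Finset.sum_congr
    · rfl
    · intro σ _
      congr 1
      unfold body T
      rw [if_pos (by simp; omega), if_pos (by simp; omega)]
      congr 1
      funext i
      rcases i with _ | i
      · simp only [if_true, List.getD_cons_zero]
        congr 1
        funext k
        by_cases hk : k < b
        · rw [dif_pos hk, List.getD_eq_getElem _ _ (by simp; omega)]
          simp
        · rw [dif_neg hk, List.getD_eq_default _ _ (by simp; omega)]
      · simp only [Nat.succ_ne_zero, if_false, List.getD_cons_succ]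
        by_cases hk : b + (i + 1) - 1 < a + b - 1
        · rw [dif_pos hk, List.getD_eq_getElem _ _ (by simp; omega)]
          simp
        · rw [dif_neg hk, List.getD_eq_default _ _ (by simp; omega)]

theorem T_ins (a b : ℕ) (F G : (ℕ → V) → V) (hF : Good (T a F)) :
    T (a + b - 1) (ins a b F G) = PP (T a F) (T b G) := by
  funext l
  by_cases hl : l.length = a + b - 1
  · simp only [T, hl, if_true]
    rw [ins_eq a b F G hF]
    have : List.ofFn (fun i : Fin (a + b - 1) => l.getD (i : ℕ) 0) = l := by
      apply List.ext_getElem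
      · simp [hl]
      · intro k h1 h2
        simp only [List.getElem_ofFn]
        exact List.getD_eq_getElem _ _ h2
    rw [this]
    rfl
  · rw [T, if_neg hl]
    by_cases ha : a = 0
    · exact (P_hom_zero _ _ _ a (by omega) (T_hom a F)).symm
    · exact ((T_hom a F).PP (T_hom b G) hF l (by omega)).symm

theorem nij_eq (a b : ℕ) (F G : (ℕ → V) → V) (hF : Good (T a F)) (hG : Good (T b G))
    (x : ℕ → V) :
    nij a b F G x = N a b (T a F) (T b G) (List.ofFn (fun i : Fin (a + b - 1) => x i)) := by
  have := ins_eq b a G F hG x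
  rw [Nat.add_comm b a] at this
  rw [nij, ins_eq a b F G hF, this]
  rfl

theorem T_nij (a b n : ℕ) (F G : (ℕ → V) → V) (hF : Good (T a F)) (hG : Good (T b G))
    (hn : n = a + b - 1) :
    T n (nij a b F G) = N a b (T a F) (T b G) := by
  subst hn
  have h1 := T_ins a b F G hF
  have h2 := T_ins b a G F hG
  rw [Nat.add_comm b a] at h2
  rw [N, ← h1, ← h2]
  funext l
  simp only [T, nij, Pi.sub_apply, Pi.smul_apply, sg]
  split <;> simp

theorem good_ext {K : Type*} [Field K] [Module K V] (n : ℕ) (A : AlternatingMap K V V (Fin n)) :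
    Good (T n (ext ⇑A)) := by
  constructor
  · intro l₁ x y l₂
    by_cases h : l₁.length + (l₂.length + 1) = n
    · simp only [T, List.length_append, List.length_cons, h, if_true, ext]
      have hk : l₁.length < n := by omega
      have key : ∀ z : V, (fun i : Fin n => (l₁ ++ z :: l₂).getD (i : ℕ) 0) =
          Function.update (fun i : Fin n => (l₁ ++ x :: l₂).getD (i : ℕ) 0) ⟨l₁.length, hk⟩ z := by
        intro z
        funext i
        by_cases hi : i = ⟨l₁.length, hk⟩
        · subst hi; simp
        · rw [Function.update_of_ne hi]
          have : (i : ℕ) ≠ l₁.length := fun h => hi (Fin.ext h)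
          rcases lt_or_gt_of_ne this with h' | h'
          · rw [List.getD_append _ _ _ _ h', List.getD_append _ _ _ _ h']
          · rw [List.getD_append_right _ _ _ _ h'.le, List.getD_append_right _ _ _ _ h'.le]
            obtain ⟨c, hc⟩ : ∃ c, (i : ℕ) - l₁.length = c + 1 := ⟨(i : ℕ) - l₁.length - 1, by omega⟩
            rw [hc, List.getD_cons_succ, List.getD_cons_succ]
      rw [key (x + y), key y, A.map_update_add, ← key x]
    · simp [T, h]
  · intro l₁ x y l₂
    by_cases h : l₁.length + (l₂.length + 1 + 1) = n
    · simp only [T, List.length_append, List.length_cons, h, if_true, ext]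
      have hk : l₁.length < n := by omega
      have hk' : l₁.length + 1 < n := by omega
      rw [← A.map_swap (i := ⟨l₁.length, hk⟩) (j := ⟨l₁.length + 1, hk'⟩) _ (by simp)]
      congr 1
      funext i
      simp only [Function.comp]
      by_cases hi : i = ⟨l₁.length, hk⟩
      · subst hi
        rw [Equiv.swap_apply_left]
        simp only
        rw [List.getD_append_right _ _ _ _ (by omega), List.getD_append_right _ _ _ _ (by omega)]
        simp
      · by_cases hi' : i = ⟨l₁.length + 1, hk'⟩
        · subst hi'
          rw [Equiv.swap_apply_right]
          simp only
          rw [List.getD_append_right _ _ _ _ (by omega), List.getD_append_right _ _ _ _ (by omega)]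
          simp
        · rw [Equiv.swap_apply_of_ne_of_ne hi hi']
          have h1 : (i : ℕ) ≠ l₁.length := fun h => hi (Fin.ext h)
          have h2 : (i : ℕ) ≠ l₁.length + 1 := fun h => hi' (Fin.ext h)
          rcases lt_or_gt_of_ne h1 with h' | h'
          · rw [List.getD_append _ _ _ _ h', List.getD_append _ _ _ _ h']
          · rw [List.getD_append_right _ _ _ _ h'.le, List.getD_append_right _ _ _ _ h'.le]
            obtain ⟨c, hc⟩ : ∃ c, (i : ℕ) - l₁.length = c + 1 + 1 :=
              ⟨(i : ℕ) - l₁.length - 2, by omega⟩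
            simp only [hc, List.getD_cons_succ]
    · simp [T, h]

theorem N_zero (a b : ℤ) (f : List V → V) (hf : Good f) : N a b f 0 = 0 := by
  funext l
  simp [N, PP, P_zero_right l f hf, P_zero_left]

theorem Hom.N {a b : ℤ} {f g : List V → V} (hf : Hom a f) (hg : Hom b g) (Gf : Good f)
    (Gg : Good g) (c d : ℤ) : Hom (a + b - 1) (N c d f g) := by
  refine (hf.PP hg Gf).sub (Hom.smul ?_ _)
  have := hg.PP hf Gg
  rwa [add_comm b a] at this

theorem main {K : Type*} [Field K] [Module K V]
    (μ : AlternatingMap K V V (Fin 2))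
    (a b : ℕ) (A : AlternatingMap K V V (Fin a)) (B : AlternatingMap K V V (Fin b)) :
    nij 2 (a + b - 1) (ext ⇑μ) (nij a b (ext ⇑A) (ext ⇑B)) = fun x =>
      nij (a + 1) b (nij 2 a (ext ⇑μ) (ext ⇑A)) (ext ⇑B) x
      + (Int.negOnePow ((a : ℤ) - 1) : ℤ) •
          nij a (b + 1) (ext ⇑A) (nij 2 b (ext ⇑μ) (ext ⇑B)) x := by
  have Gm := good_ext 2 μ
  have GA := good_ext a A
  have GB := good_ext b B
  have HA := T_hom a (ext ⇑A)
  have HB := T_hom b (ext ⇑B)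
  have t1 := T_nij a b _ _ _ GA GB rfl
  have t2 := T_nij 2 a (a + 1) _ _ Gm GA (by omega)
  have t3 := T_nij 2 b (b + 1) _ _ Gm GB (by omega)
  have J := jacobi a b _ _ _ Gm GA GB (T_hom 2 _) HA HB
  funext x
  rw [nij_eq 2 (a + b - 1) _ _ Gm (by rw [t1]; exact GA.N _ _ GB),
    nij_eq (a + 1) b _ _ (by rw [t2]; exact Gm.N _ _ GA) GB,
    nij_eq a (b + 1) _ _ GA (by rw [t3]; exact Gm.N _ _ GB), t1, t2, t3]
  have e1 : a + (b + 1) - 1 = a + 1 + b - 1 := by omega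
  rw [e1]
  have J' := congrFun J (List.ofFn (fun i : Fin (a + 1 + b - 1) => x i))
  simp only [Pi.add_apply, Pi.smul_apply] at J'
  push_cast
  rw [show (Int.negOnePow ((a : ℤ) - 1) : ℤ) = sg (a - 1) from rfl]
  refine Eq.trans ?_ J'
  by_cases h : a + b = 0
  · have hz : N (a : ℤ) b (T a (ext ⇑A)) (T b (ext ⇑B)) = 0 :=
      (HA.N HB GA GB _ _).neg (by omega)
    rw [hz, N_zero _ _ _ Gm, N_zero _ _ _ Gm]
    rfl
  · have e2 : 2 + (a + b - 1) - 1 = a + 1 + b - 1 := by omega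
    have e3 : ((a + b - 1 : ℕ) : ℤ) = a + b - 1 := by omega
    rw [e2, e3]

end NijAux


/-- for a Lie algebra `g` over a field `K` of characteristic 0 with Lie
bracket `μ ∈ C^2(g)`, the differential `D := [μ, −]` is an odd derivation of the Nijenhuis
bracket: `D[A,B] = [D A, B] + (−1)^{a−1} [A, D B]` for `A ∈ C^a(g)`, `B ∈ C^b(g)`. -/
theorem nij_differential_is_odd_derivation
    {K : Type*} [Field K] [CharZero K] {L : Type*} [LieRing L] [LieAlgebra K L]
    (μ : AlternatingMap K L L (Fin 2)) (hμ : ∀ x y : L, μ ![x, y] = ⁅x, y⁆)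
    (a b : ℕ) (A : AlternatingMap K L L (Fin a)) (B : AlternatingMap K L L (Fin b)) :
    nij 2 (a + b - 1) (ext ⇑μ) (nij a b (ext ⇑A) (ext ⇑B)) = fun x =>
      nij (a + 1) b (nij 2 a (ext ⇑μ) (ext ⇑A)) (ext ⇑B) x
      + (Int.negOnePow ((a : ℤ) - 1) : ℤ) •
          nij a (b + 1) (ext ⇑A) (nij 2 b (ext ⇑μ) (ext ⇑B)) x := by
  exact NijAux.main μ a b A B
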